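/- Under the assumption that μ_i ≠ 0 for every i = 0,…,N−1, given a vector y in K^N, define z by the forward recursion z_i = (y_i − δ_i z_{i−1} − ξ_i z_{i−2} − c*_i z_{i−3}) / μ_i (terms with negative indices are 0), and then x by the backward recursion x_j = z_j − α_j x_{j+1} − β_j x_{j+2} − γ_j x_{j+3} for j = N−1 down to 0 (terms with indices ≥ N are 0). Then A·x = y, and x is the unique solution of this system. -/

import Mathlib

/-! The sequences are the coefficients of a factorisation `A = L U`, where `L` is lower triangular
with bands `μ, δ, ξ, c*` and `U` is unit upper triangular with bands `1, α, β, γ`.  In terms of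
vectors (`mulVec_eq_lower`): if `u = U v`, then `A v = L u`.  The forward sweep is `L z = y` and the
backward sweep is `U x = z`, so `A x = L z = y`.  Conversely, if `A w = y` then `L (U w) = y`;
as the pivots `μ i` are nonzero, forward substitution forces `U w = z`, and backward
substitution then forces `w = x`. -/

open Matrix Finset

/-- The `(i, j)` entry of the `N × N` matrix `A`, at integer indices,
with the convention that out-of-range entries are `0`. -/
def ent {K : Type*} [Field K] {N : ℕ} (A : Matrix (Fin N) (Fin N) K) (i j : ℤ) : K :=
  if h : 0 ≤ i ∧ i < (N : ℤ) ∧ 0 ≤ j ∧ j < (N : ℤ) then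
    A ⟨i.toNat, by omega⟩ ⟨j.toNat, by omega⟩
  else 0

/-- The value of a vector `y ∈ K^N` at an integer index, with the convention
that out-of-range values are `0`. -/
def vent {K : Type*} [Field K] {N : ℕ} (y : Fin N → K) (i : ℤ) : K :=
  if h : 0 ≤ i ∧ i < (N : ℤ) then y ⟨i.toNat, by omega⟩ else 0

/-- `A` is heptadiagonal: entries vanish at distance `> 3` from the diagonal. -/
def Heptadiagonal {K : Type*} [Field K] {N : ℕ} (A : Matrix (Fin N) (Fin N) K) : Prop :=
  ∀ i j : Fin N, 3 < |(i : ℤ) - (j : ℤ)| → A i j = 0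

/-- The sequences `δ, ξ, μ, α, β, γ` of the symbolic algorithm for a heptadiagonal
matrix `A`, written with the subdiagonals `a*_i = A i (i-1)`, `b*_i = A i (i-2)`,
`c*_i = A i (i-3)`, the diagonal `d_i = A i i` and the superdiagonals
`a_i = A i (i+1)`, `b_i = A i (i+2)`, `c_i = A i (i+3)`.  All terms with negative
index are `0`. -/
def AlgSeqs {K : Type*} [Field K] {N : ℕ} (A : Matrix (Fin N) (Fin N) K)
    (δ ξ μ α β γ : ℤ → K) : Prop :=
  (∀ i : ℤ, i < 0 → δ i = 0 ∧ ξ i = 0 ∧ μ i = 0 ∧ α i = 0 ∧ β i = 0 ∧ γ i = 0) ∧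
  (∀ i : ℤ, 0 ≤ i → i < (N : ℤ) →
    δ i = ent A i (i - 1) - α (i - 2) * ent A i (i - 2)
        - ent A i (i - 3) * (β (i - 3) - α (i - 3) * α (i - 2)) ∧
    ξ i = ent A i (i - 2) - α (i - 3) * ent A i (i - 3) ∧
    μ i = ent A i i - α (i - 1) * δ i - β (i - 2) * ξ i - γ (i - 3) * ent A i (i - 3) ∧
    α i = (ent A i (i + 1) - β (i - 1) * δ i - γ (i - 2) * ξ i) / μ i ∧
    β i = (ent A i (i + 2) - γ (i - 1) * δ i) / μ i ∧
    γ i = ent A i (i + 3) / μ i)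

/-- The `k`-th leading principal minor of `A` : the determinant of the
`(k+1) × (k+1)` top-left submatrix. -/
def lpm {K : Type*} [Field K] {N : ℕ} (A : Matrix (Fin N) (Fin N) K) (k : ℕ)
    (hk : k + 1 ≤ N) : K :=
  (A.submatrix (Fin.castLE hk) (Fin.castLE hk)).det

/-- The `k`-th leading principal minor of `A`, defined as `0` out of range. -/
def lpm' {K : Type*} [Field K] {N : ℕ} (A : Matrix (Fin N) (Fin N) K) (k : ℕ) : K :=
  if h : k + 1 ≤ N then lpm A k h else 0

/-- The lower triangular band factor `L` of the algorithm:
`L i i = μ i`, `L i (i-1) = δ i`, `L i (i-2) = ξ i`, `L i (i-3) = c*_i`. -/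
def Lmat {K : Type*} [Field K] {N : ℕ} (A : Matrix (Fin N) (Fin N) K)
    (δ ξ μ : ℤ → K) : Matrix (Fin N) (Fin N) K :=
  Matrix.of fun i j : Fin N =>
    if (i : ℤ) = (j : ℤ) then μ (i : ℤ)
    else if (i : ℤ) = (j : ℤ) + 1 then δ (i : ℤ)
    else if (i : ℤ) = (j : ℤ) + 2 then ξ (i : ℤ)
    else if (i : ℤ) = (j : ℤ) + 3 then ent A (i : ℤ) ((i : ℤ) - 3)
    else 0

/-- The unit upper triangular band factor `U` of the algorithm:
`U i i = 1`, `U i (i+1) = α i`, `U i (i+2) = β i`, `U i (i+3) = γ i`. -/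
def Umat {K : Type*} [Field K] (N : ℕ) (α β γ : ℤ → K) : Matrix (Fin N) (Fin N) K :=
  Matrix.of fun i j : Fin N =>
    if (j : ℤ) = (i : ℤ) then 1
    else if (j : ℤ) = (i : ℤ) + 1 then α (i : ℤ)
    else if (j : ℤ) = (i : ℤ) + 2 then β (i : ℤ)
    else if (j : ℤ) = (i : ℤ) + 3 then γ (i : ℤ)
    else 0

theorem ent_coe {K : Type*} [Field K] {N : ℕ} (A : Matrix (Fin N) (Fin N) K) (i j : Fin N) :
    ent A (i : ℤ) (j : ℤ) = A i j := by
  have hi := i.isLt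
  have hj := j.isLt
  unfold ent
  rw [dif_pos (by omega)]
  rfl

theorem vent_coe {K : Type*} [Field K] {N : ℕ} (y : Fin N → K) (i : Fin N) :
    vent y (i : ℤ) = y i := by
  have hi := i.isLt
  unfold vent
  rw [dif_pos (by omega)]
  rfl

theorem ent_eq_zero_of_out {K : Type*} [Field K] {N : ℕ} (A : Matrix (Fin N) (Fin N) K)
    (i j : ℤ) (h : j < 0 ∨ (N : ℤ) ≤ j) : ent A i j = 0 := by
  unfold ent
  rw [dif_neg (by omega)]

theorem ent_eq_zero_of_far {K : Type*} [Field K] {N : ℕ} {A : Matrix (Fin N) (Fin N) K}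
    (hA : Heptadiagonal A) (i j : ℤ) (h : 3 < |i - j|) : ent A i j = 0 := by
  unfold ent
  split_ifs with hr
  · apply hA
    simpa [Int.toNat_of_nonneg hr.1, Int.toNat_of_nonneg hr.2.2.1] using h
  · rfl

/-- A row of `A v` has only the seven band terms.  The values of `v` outside `[0, N)` are
irrelevant, because the corresponding entries of `A` are `0`. -/
theorem mulVec_eq_band {K : Type*} [Field K] {N : ℕ} {A : Matrix (Fin N) (Fin N) K}
    (hA : Heptadiagonal A) (v : ℤ → K) (i : Fin N) :
    A.mulVec (fun j : Fin N => v (j : ℤ)) i =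
      ent A i (i - 3) * v (i - 3) + ent A i (i - 2) * v (i - 2) + ent A i (i - 1) * v (i - 1)
        + ent A i i * v i + ent A i (i + 1) * v (i + 1) + ent A i (i + 2) * v (i + 2)
        + ent A i (i + 3) * v (i + 3) := by
  have hi := i.isLt
  have hinj : Function.Injective (fun j : Fin N => (j : ℤ)) := fun a b h => by
    apply Fin.ext
    simpa using h
  have h1 : A.mulVec (fun j : Fin N => v (j : ℤ)) i =
      ∑ k ∈ Finset.univ.map ⟨fun j : Fin N => (j : ℤ), hinj⟩, ent A i k * v k := by
    rw [Finset.sum_map]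
    simp [Matrix.mulVec, dotProduct, ent_coe]
  -- Both the index range `[0, N)` and the band `[i - 3, i + 3]` lie in `[-3, N + 3]`.
  have h2 : ∑ k ∈ Finset.univ.map ⟨fun j : Fin N => (j : ℤ), hinj⟩, ent A i k * v k
      = ∑ k ∈ Finset.Icc (-3 : ℤ) (N + 3), ent A i k * v k := by
    apply Finset.sum_subset
    · intro k hk
      simp only [Finset.mem_map, Finset.mem_univ, true_and, Function.Embedding.coeFn_mk] at hk
      obtain ⟨j, rfl⟩ := hk
      have hj := j.isLt
      rw [Finset.mem_Icc]
      omega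
    · intro k _ hk
      rw [ent_eq_zero_of_out, zero_mul]
      by_contra hc
      apply hk
      simp only [Finset.mem_map, Finset.mem_univ, true_and, Function.Embedding.coeFn_mk]
      refine ⟨⟨k.toNat, by omega⟩, ?_⟩
      simp only [Int.ofNat_toNat]
      omega
  have h3 : ∑ k ∈ Finset.Icc ((i : ℤ) - 3) (i + 3), ent A i k * v k
      = ∑ k ∈ Finset.Icc (-3 : ℤ) (N + 3), ent A i k * v k := by
    apply Finset.sum_subset
    · intro k hk
      rw [Finset.mem_Icc] at hk ⊢
      omega
    · intro k _ hk
      rw [Finset.mem_Icc] at hk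
      rw [ent_eq_zero_of_far hA, zero_mul]
      rw [lt_abs]
      omega
  have h4 : Finset.Icc ((i : ℤ) - 3) (i + 3) =
      {(i : ℤ) - 3, (i : ℤ) - 2, (i : ℤ) - 1, (i : ℤ), (i : ℤ) + 1, (i : ℤ) + 2, (i : ℤ) + 3} := by
    ext k
    simp only [Finset.mem_Icc, Finset.mem_insert, Finset.mem_singleton]
    omega
  rw [h1, h2, ← h3, h4]
  repeat rw [Finset.sum_insert (by simp only [Finset.mem_insert, Finset.mem_singleton]; omega)]
  rw [Finset.sum_singleton]
  ring

/-- The factorisation `A = L U`, for nonzero pivots, applied to a vector: if `u = U v` on `[0, N)`,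
then `A v = L u`. -/
theorem mulVec_eq_lower {K : Type*} [Field K] {N : ℕ} {A : Matrix (Fin N) (Fin N) K}
    (hA : Heptadiagonal A) {δ ξ μ α β γ : ℤ → K} (hseq : AlgSeqs A δ ξ μ α β γ)
    (hμ : ∀ i : ℤ, 0 ≤ i → i < (N : ℤ) → μ i ≠ 0) (v u : ℤ → K)
    (hu : ∀ j : ℤ, 0 ≤ j → j < (N : ℤ) →
      u j = v j + α j * v (j + 1) + β j * v (j + 2) + γ j * v (j + 3)) (i : Fin N) :
    A.mulVec (fun j : Fin N => v (j : ℤ)) i =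
      μ i * u i + δ i * u (i - 1) + ξ i * u (i - 2) + ent A i (i - 3) * u (i - 3) := by
  rw [mulVec_eq_band hA]
  obtain ⟨i, hiN⟩ := i
  simp only
  have h0 : (0 : ℤ) ≤ (i : ℤ) := by omega
  have hN : (i : ℤ) < N := by omega
  generalize (i : ℤ) = i at h0 hN ⊢
  obtain ⟨hneg, hpos⟩ := hseq
  obtain ⟨e1, e2, e3, e4, e5, e6⟩ := hpos i h0 hN
  have hm := hμ i h0 hN
  rw [eq_div_iff hm] at e4 e5 e6
  -- The coefficients of `L` vanish in the columns with negative index, so that the defining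
  -- equation of `u`, known only on `[0, N)`, may be used there as well.
  have c3 : i - 3 < 0 → ent A i (i - 3) = 0 := fun h => ent_eq_zero_of_out A _ _ (Or.inl h)
  have c2 : i - 2 < 0 → ξ i = 0 := fun h => by
    rw [e2, ent_eq_zero_of_out A _ _ (Or.inl h), c3 (by omega)]
    ring
  have c1 : i - 1 < 0 → δ i = 0 := fun h => by
    rw [e1, ent_eq_zero_of_out A _ _ (Or.inl h), c3 (by omega),
      ent_eq_zero_of_out A i (i - 2) (Or.inl (by omega))]
    ring
  have t0 := hu i h0 hN
  have t1 : δ i * u (i - 1) = δ i * (v (i - 1) + α (i - 1) * v i + β (i - 1) * v (i + 1)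
      + γ (i - 1) * v (i + 2)) := by
    by_cases h : i - 1 < 0
    · rw [c1 h, zero_mul, zero_mul]
    · rw [hu (i - 1) (by omega) (by omega), show i - 1 + 1 = i by ring,
        show i - 1 + 2 = i + 1 by ring, show i - 1 + 3 = i + 2 by ring]
  have t2 : ξ i * u (i - 2) = ξ i * (v (i - 2) + α (i - 2) * v (i - 1) + β (i - 2) * v i
      + γ (i - 2) * v (i + 1)) := by
    by_cases h : i - 2 < 0
    · rw [c2 h, zero_mul, zero_mul]
    · rw [hu (i - 2) (by omega) (by omega), show i - 2 + 1 = i - 1 by ring,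
        show i - 2 + 2 = i by ring, show i - 2 + 3 = i + 1 by ring]
  have t3 : ent A i (i - 3) * u (i - 3) = ent A i (i - 3) * (v (i - 3) + α (i - 3) * v (i - 2)
      + β (i - 3) * v (i - 1) + γ (i - 3) * v i) := by
    by_cases h : i - 3 < 0
    · rw [c3 h, zero_mul, zero_mul]
    · rw [hu (i - 3) (by omega) (by omega), show i - 3 + 1 = i - 2 by ring,
        show i - 3 + 2 = i - 1 by ring, show i - 3 + 3 = i by ring]
  rw [t0, t1, t2, t3]
  linear_combination -v (i - 1) * e1 - (v (i - 2) + α (i - 2) * v (i - 1)) * e2 - v i * e3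
    - v (i + 1) * e4 - v (i + 2) * e5 - v (i + 3) * e6

/-- if all pivots `μ i` are nonzero, then the vector `x` produced by the
forward sweep followed by the backward sweep satisfies `A x = y`, and it is the unique
solution of this system. -/
theorem algorithm_solves_heptadiagonal_system {K : Type*} [Field K] {N : ℕ} (hN : 1 ≤ N)
    (A : Matrix (Fin N) (Fin N) K) (hA : Heptadiagonal A)
    (δ ξ μ α β γ : ℤ → K) (hseq : AlgSeqs A δ ξ μ α β γ)
    (hμ : ∀ i : ℤ, 0 ≤ i → i < (N : ℤ) → μ i ≠ 0)
    (y : Fin N → K) (z x : ℤ → K)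
    (hz0 : ∀ i : ℤ, i < 0 → z i = 0)
    (hz : ∀ i : ℤ, 0 ≤ i → i < (N : ℤ) →
      z i = (vent y i - δ i * z (i - 1) - ξ i * z (i - 2)
              - ent A i (i - 3) * z (i - 3)) / μ i)
    (hxN : ∀ j : ℤ, (N : ℤ) ≤ j → x j = 0)
    (hx : ∀ j : ℤ, 0 ≤ j → j < (N : ℤ) →
      x j = z j - α j * x (j + 1) - β j * x (j + 2) - γ j * x (j + 3)) :
    A.mulVec (fun i : Fin N => x (i : ℤ)) = y ∧
    ∀ w : Fin N → K, A.mulVec w = y → w = fun i : Fin N => x (i : ℤ) := by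
  have hz' : ∀ i : Fin N, μ i * z i + δ i * z (i - 1) + ξ i * z (i - 2)
      + ent A i (i - 3) * z (i - 3) = y i := by
    intro i
    have hi := i.isLt
    have h := hz i (by omega) (by omega)
    rw [eq_div_iff (hμ i (by omega) (by omega)), vent_coe] at h
    linear_combination h
  refine ⟨?_, ?_⟩
  · funext i
    rw [mulVec_eq_lower hA hseq hμ x z (fun j h0 hj => by rw [hx j h0 hj]; ring), hz']
  · intro w hw
    -- `u = U w`, extended by `0` to negative indices as `z` is.
    let u : ℤ → K := fun j => if j < 0 then 0 else
      vent w j + α j * vent w (j + 1) + β j * vent w (j + 2) + γ j * vent w (j + 3)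
    have hu0 : ∀ j : ℤ, j < 0 → u j = 0 := fun j h => if_pos h
    have hu : ∀ j : ℤ, 0 ≤ j → j < (N : ℤ) → u j =
        vent w j + α j * vent w (j + 1) + β j * vent w (j + 2) + γ j * vent w (j + 3) :=
      fun j h _ => if_neg (not_lt.mpr h)
    have hLu : ∀ i : Fin N, μ i * u i + δ i * u (i - 1) + ξ i * u (i - 2)
        + ent A i (i - 3) * u (i - 3) = y i := by
      intro i
      rw [← mulVec_eq_lower hA hseq hμ (vent w) u hu i]
      simp only [vent_coe]
      exact congrFun hw i
    have forward : ∀ n : ℕ, ∀ i : ℤ, i < n → i < N → u i = z i := by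
      intro n
      induction n with
      | zero =>
        intro i h _
        have h' : i < 0 := by simpa using h
        rw [hu0 i h', hz0 i h']
      | succ n ih =>
        intro i h hiN
        by_cases h0 : i < 0
        · rw [hu0 i h0, hz0 i h0]
        push Not at h0
        obtain ⟨k, rfl⟩ := Int.eq_ofNat_of_zero_le h0
        have hk : k < N := by omega
        have a := hLu ⟨k, hk⟩
        have b := hz' ⟨k, hk⟩
        simp only at a b
        rw [ih (k - 1) (by omega) (by omega), ih (k - 2) (by omega) (by omega),
          ih (k - 3) (by omega) (by omega)] at a
        apply mul_left_cancel₀ (hμ k h0 hiN)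
        linear_combination a - b
    have backward : ∀ n : ℕ, ∀ j : ℤ, 0 ≤ j → (N : ℤ) - n ≤ j → vent w j = x j := by
      have out : ∀ j : ℤ, (N : ℤ) ≤ j → vent w j = x j := by
        intro j h
        rw [hxN j h, vent, dif_neg (by omega)]
      intro n
      induction n with
      | zero =>
        intro j _ h
        exact out j (by simpa using h)
      | succ n ih =>
        intro j h0 h
        by_cases hj : (N : ℤ) ≤ j
        · exact out j hj
        push Not at hj
        have a := hu j h0 hj
        rw [forward N j hj hj, ih (j + 1) (by omega) (by omega), ih (j + 2) (by omega) (by omega),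
          ih (j + 3) (by omega) (by omega)] at a
        rw [hx j h0 hj]
        linear_combination -a
    funext i
    rw [← backward N i (by omega) (by omega), vent_coe]
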